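/- arXiv:1506.06932 — 2 statements merged into one kernel-verified Lean document; each statement's English description precedes it below -/
import Mathlib

section
/- Suppose 0 < τ < β/2 and set κ = 1/(1 − 2τ/β) and Δt_c = 2/ρ(A) (the forward Euler stability threshold). Then κ > 1 and for every Δt with 0 < Δt < κ·Δt_c, any u, u' ∈ ℝ^N satisfying the RSS step (u' − u)/Δt + τ B(u' − u) = −A u obey ⟨A u', u'⟩ ≤ ⟨A u, u⟩; in this sense RSS is at least κ times more stable than forward Euler. -/
open Matrix

theorem rayleigh_aux {N : ℕ} (A : Matrix (Fin N) (Fin N) ℝ) (hA : A.IsHermitian) (r : ℝ)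
    (hr : ∀ i, hA.eigenvalues i ≤ r) (d : Fin N → ℝ) :
    A.mulVec d ⬝ᵥ d ≤ r * (d ⬝ᵥ d) := by
  have h1 : (r • (1 : Matrix (Fin N) (Fin N) ℝ) - A).PosSemidef := by
    have hU := Matrix.mem_unitaryGroup_iff.1 hA.eigenvectorUnitary.2
    have e : r • (1 : Matrix (Fin N) (Fin N) ℝ) - A =
        (hA.eigenvectorUnitary : Matrix (Fin N) (Fin N) ℝ) *
          Matrix.diagonal (fun i => r - hA.eigenvalues i) *
          (hA.eigenvectorUnitary : Matrix (Fin N) (Fin N) ℝ)ᴴ := by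
      have h := hA.spectral_theorem
      rw [Unitary.conjStarAlgAut_apply] at h
      have hd : Matrix.diagonal (fun i => r - hA.eigenvalues i) =
          r • (1 : Matrix (Fin N) (Fin N) ℝ) - Matrix.diagonal (RCLike.ofReal ∘ hA.eigenvalues) := by
        ext i j
        by_cases hij : i = j
        · subst hij; simp
        · simp [hij]
      rw [hd, Matrix.mul_sub, Matrix.sub_mul]
      congr 1
      rw [Matrix.mul_smul, Matrix.mul_one, Matrix.smul_mul, ← Matrix.star_eq_conjTranspose, hU]
    rw [e]
    exact (Matrix.PosSemidef.diagonal (fun i => sub_nonneg.2 (hr i))).mul_mul_conjTranspose_same _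
  have h2 := h1.dotProduct_mulVec_nonneg d
  rw [Matrix.sub_mulVec, Matrix.smul_mulVec, Matrix.one_mulVec, dotProduct_sub,
    dotProduct_smul, star_trivial, smul_eq_mul] at h2
  rw [dotProduct_comm]
  linarith

/-- With `0 < τ < β/2`, `κ = 1/(1 − 2τ/β)` and `Δt_c = 2/ρ(A)`
(the forward Euler stability threshold), one has `κ > 1` and the RSS step is
energy stable for every time step `0 < Δt < κ·Δt_c`: RSS is at least `κ`
times more stable than forward Euler. -/
theorem rss_kappa_times_more_stable
    {N : ℕ} (hN : 0 < N) (A B : Matrix (Fin N) (Fin N) ℝ)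
    (hA : A.PosDef) (hB : B.PosDef)
    (α β : ℝ) (hα : 0 < α) (hαβ : α ≤ β)
    (hlow : ∀ u : Fin N → ℝ, α * (B.mulVec u ⬝ᵥ u) ≤ A.mulVec u ⬝ᵥ u)
    (hup : ∀ u : Fin N → ℝ, A.mulVec u ⬝ᵥ u ≤ β * (B.mulVec u ⬝ᵥ u))
    (τ : ℝ) (hτ : 0 < τ) (hτβ : τ < β / 2) :
    1 < 1 / (1 - 2 * τ / β) ∧
      ∀ Δt : ℝ, 0 < Δt →
        Δt < (1 / (1 - 2 * τ / β)) * (2 / (⨆ i, hA.1.eigenvalues i)) →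
        ∀ u u' : Fin N → ℝ,
          (1 / Δt) • (u' - u) + τ • B.mulVec (u' - u) = -(A.mulVec u) →
          A.mulVec u' ⬝ᵥ u' ≤ A.mulVec u ⬝ᵥ u := by
  have hβ : 0 < β := by linarith
  have hq : 0 < 1 - 2 * τ / β := by
    rw [sub_pos, div_lt_one hβ]; linarith
  have hq1 : 1 - 2 * τ / β < 1 := by
    have : 0 < 2 * τ / β := by positivity
    linarith
  refine ⟨(one_lt_div hq).2 hq1, ?_⟩
  intro Δt hΔ hlt u u' hstep
  have hle : ∀ i, hA.1.eigenvalues i ≤ ⨆ i, hA.1.eigenvalues i := fun i =>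
    le_ciSup (Set.finite_range _).bddAbove i
  have hρ : 0 < ⨆ i, hA.1.eigenvalues i := lt_of_lt_of_le (hA.eigenvalues_pos ⟨0, hN⟩) (hle _)
  have hray := rayleigh_aux A hA.1 _ hle (u' - u)
  generalize (⨆ i, hA.1.eigenvalues i) = ρ at *
  generalize hd : u' - u = d at *
  obtain rfl : u' = u + d := by rw [← hd]; abel
  have hs := congrArg (fun v => v ⬝ᵥ d) hstep
  simp only [add_dotProduct, smul_dotProduct, neg_dotProduct, smul_eq_mul] at hs
  have hsym : A.mulVec d ⬝ᵥ u = A.mulVec u ⬝ᵥ d := by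
    rw [dotProduct_comm, Matrix.dotProduct_mulVec, ← Matrix.mulVec_transpose]
    have : Aᵀ = A := by simpa using hA.1.eq
    rw [this]
  have hB' := hup d
  rw [Matrix.mulVec_add, add_dotProduct, dotProduct_add, dotProduct_add, hsym]
  have hdd : 0 ≤ d ⬝ᵥ d := by simpa using dotProduct_star_self_nonneg d
  generalize A.mulVec d ⬝ᵥ d = a at *
  generalize B.mulVec d ⬝ᵥ d = b at *
  generalize d ⬝ᵥ d = n at *
  generalize A.mulVec u ⬝ᵥ d = c at *
  have h1 : 2 * τ / β * a ≤ 2 * τ * b := by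
    rw [div_mul_eq_mul_div, div_le_iff₀ hβ]; nlinarith
  have h2 : (1 - 2 * τ / β) * ρ ≤ 2 * (1 / Δt) := by
    rw [div_mul_div_comm, lt_div_iff₀ (by positivity)] at hlt
    rw [mul_one_div, le_div_iff₀ hΔ]; linarith
  have h3 := mul_le_mul_of_nonneg_left hray hq.le
  have h4 := mul_le_mul_of_nonneg_right h2 hdd
  linarith
end

section
/- Suppose τ ≥ β/2 and (τ/β − 1/2)·λ_min − L/(2ε²) < 0, where λ_min is the smallest eigenvalue of A. Then for every Δt with 0 < Δt < 1/(L/(2ε²) − (τ/β − 1/2)·λ_min), any u, u' ∈ ℝ^N satisfying the nonlinear RSS step (u' − u)/Δt + τ B(u' − u) + (1/ε²) f(u) = −A u obey E(u') ≤ E(u). -/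
open Matrix

lemma aux_taylor (L : ℝ) (f F : ℝ → ℝ)
    (hf : ∀ x, DifferentiableAt ℝ f x) (hfL : ∀ x, |deriv f x| ≤ L)
    (hF : ∀ x, HasDerivAt F (f x) x) (x y : ℝ) :
    F y ≤ F x + f x * (y - x) + L / 2 * (y - x) ^ 2 := by
  have hG : ∀ z, HasDerivAt (fun z => L / 2 * z ^ 2 - F z) (L * z - f z) z := by
    intro z
    have h := ((hasDerivAt_pow 2 z).const_mul (L / 2)).sub (hF z)
    have e : L * z - f z = L / 2 * (((2 : ℕ) : ℝ) * z ^ (2 - 1)) - f z := by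
      norm_num
      ring
    rw [e]
    exact h
  have hd : deriv (fun z => L / 2 * z ^ 2 - F z) = fun z => L * z - f z :=
    funext fun z => (hG z).deriv
  have hm : Monotone (fun z => L * z - f z) := by
    have hh : ∀ z, HasDerivAt (fun z => L * z - f z) (L * 1 - deriv f z) z := fun z =>
      ((hasDerivAt_id z).const_mul L).sub (hf z).hasDerivAt
    apply monotone_of_deriv_nonneg (fun z => (hh z).differentiableAt)
    intro z
    rw [(hh z).deriv]
    have := (abs_le.1 (hfL z)).2
    linarith
  have hc : ConvexOn ℝ Set.univ (fun z => L / 2 * z ^ 2 - F z) := by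
    apply Monotone.convexOn_univ_of_deriv (fun z => (hG z).differentiableAt)
    rw [hd]; exact hm
  rcases lt_trichotomy x y with h | h | h
  · have h1 := hc.le_slope_of_hasDerivAt (Set.mem_univ x) (Set.mem_univ y) h (hG x)
    rw [slope_def_field, le_div_iff₀ (by linarith)] at h1
    nlinarith
  · subst h; simp
  · have h1 := hc.slope_le_of_hasDerivAt (Set.mem_univ y) (Set.mem_univ x) h (hG x)
    rw [slope_def_field, div_le_iff₀ (by linarith)] at h1
    nlinarith

lemma aux_rayleigh {N : ℕ} (A : Matrix (Fin N) (Fin N) ℝ) (hA : A.IsHermitian)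
    (d : Fin N → ℝ) : (⨅ i, hA.eigenvalues i) * (d ⬝ᵥ d) ≤ A.mulVec d ⬝ᵥ d := by
  set m := ⨅ i, hA.eigenvalues i with hm
  have hle : ∀ i, m ≤ hA.eigenvalues i := fun i => ciInf_le (Set.finite_range _).bddBelow i
  have hps : (A - m • (1 : Matrix (Fin N) (Fin N) ℝ)).PosSemidef := by
    have hH : (A - m • (1 : Matrix (Fin N) (Fin N) ℝ)).IsHermitian := by
      apply hA.sub
      simp [Matrix.IsHermitian]
    rw [Matrix.posSemidef_iff_isHermitian_and_spectrum_nonneg]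
    refine ⟨hH, ?_⟩
    intro z hz
    have h2 : z + m ∈ spectrum ℝ A := by
      rw [spectrum.mem_iff] at hz ⊢
      convert hz using 2
      rw [map_add, Algebra.algebraMap_eq_smul_one m]
      abel
    rw [hA.spectrum_real_eq_range_eigenvalues] at h2
    obtain ⟨i, hi⟩ := h2
    have := hle i
    simp only [Set.mem_ofPred_eq]
    linarith
  have := hps.dotProduct_mulVec_nonneg d
  simp [Matrix.sub_mulVec, Matrix.smul_mulVec, dotProduct_sub] at this
  rw [dotProduct_comm (A.mulVec d)]
  exact this


/-- if `τ ≥ β/2` and `(τ/β − 1/2)·λ_min − L/(2ε²) < 0` (with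
`λ_min` the smallest eigenvalue of `A`), then for every time step
`0 < Δt < 1/(L/(2ε²) − (τ/β − 1/2)·λ_min)`, the nonlinear RSS step
`(u' − u)/Δt + τ B (u' − u) + (1/ε²) f(u) = −A u` is energy decreasing:
`E(u') ≤ E(u)`, where `E(u) = (1/2)⟨Au,u⟩ + (1/ε²) Σᵢ F(uᵢ)`. -/
theorem nonlinear_rss_conditional_stability_large_tau
    {N : ℕ} (hN : 0 < N) (A B : Matrix (Fin N) (Fin N) ℝ)
    (hA : A.PosDef) (hB : B.PosDef)
    (α β : ℝ) (hα : 0 < α) (hαβ : α ≤ β)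
    (hlow : ∀ u : Fin N → ℝ, α * (B.mulVec u ⬝ᵥ u) ≤ A.mulVec u ⬝ᵥ u)
    (hup : ∀ u : Fin N → ℝ, A.mulVec u ⬝ᵥ u ≤ β * (B.mulVec u ⬝ᵥ u))
    (ε L τ : ℝ) (hε : 0 < ε) (hL : 0 ≤ L) (hτ : 0 < τ)
    (f F : ℝ → ℝ)
    (hf : ∀ x, DifferentiableAt ℝ f x) (hfL : ∀ x, |deriv f x| ≤ L)
    (hF : ∀ x, HasDerivAt F (f x) x) (hF0 : F 0 = 0)
    (hτβ : β / 2 ≤ τ)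
    (hcond : (τ / β - 1 / 2) * (⨅ i, hA.1.eigenvalues i) - L / (2 * ε ^ 2) < 0) :
    ∀ Δt : ℝ, 0 < Δt →
      Δt < 1 / (L / (2 * ε ^ 2) - (τ / β - 1 / 2) * (⨅ i, hA.1.eigenvalues i)) →
      ∀ u u' : Fin N → ℝ,
        (1 / Δt) • (u' - u) + τ • B.mulVec (u' - u)
            + (1 / ε ^ 2) • (fun i => f (u i)) = -(A.mulVec u) →
        (1 / 2) * (A.mulVec u' ⬝ᵥ u') + (1 / ε ^ 2) * ∑ i, F (u' i) ≤
          (1 / 2) * (A.mulVec u ⬝ᵥ u) + (1 / ε ^ 2) * ∑ i, F (u i) := by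
  intro Δt hΔ hΔ2 u u' hstep
  set m := ⨅ i, hA.1.eigenvalues i with hm
  have hβ : 0 < β := lt_of_lt_of_le hα hαβ
  obtain ⟨d, rfl⟩ : ∃ d, u' = u + d := ⟨u' - u, by simp⟩
  simp only [add_sub_cancel_left] at hstep
  have hR := aux_rayleigh A hA.1 d
  rw [← hm] at hR
  have hsym : A.mulVec d ⬝ᵥ u = A.mulVec u ⬝ᵥ d := by
    have hT : Aᵀ = A := by simpa [Matrix.IsHermitian] using hA.1
    rw [dotProduct_comm, Matrix.dotProduct_mulVec, ← Matrix.mulVec_transpose, hT]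
  have hdot := congrArg (fun v => v ⬝ᵥ d) hstep
  simp only [add_dotProduct, smul_dotProduct, neg_dotProduct, smul_eq_mul] at hdot
  have hT : ∑ i, F ((u + d) i) ≤ ∑ i, F (u i) + (fun i => f (u i)) ⬝ᵥ d + L / 2 * (d ⬝ᵥ d) := by
    simp only [dotProduct, Finset.mul_sum, ← Finset.sum_add_distrib]
    apply Finset.sum_le_sum
    intro i _
    have := aux_taylor L f F hf hfL hF (u i) ((u + d) i)
    simp only [Pi.add_apply, add_sub_cancel_left] at this ⊢
    linarith
  have hT2 := mul_le_mul_of_nonneg_left hT (by positivity : 0 ≤ 1 / ε ^ 2)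
  have hA2 : A.mulVec (u + d) ⬝ᵥ (u + d) =
      A.mulVec u ⬝ᵥ u + 2 * (A.mulVec u ⬝ᵥ d) + A.mulVec d ⬝ᵥ d := by
    rw [Matrix.mulVec_add, add_dotProduct, dotProduct_add, dotProduct_add, hsym]; ring
  have hdd : 0 ≤ d ⬝ᵥ d := Finset.sum_nonneg fun i _ => mul_self_nonneg _
  have hk : 0 ≤ τ / β - 1 / 2 := by
    rw [sub_nonneg, le_div_iff₀ hβ]; linarith
  have h1 : τ / β * (A.mulVec d ⬝ᵥ d) ≤ τ * (B.mulVec d ⬝ᵥ d) := by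
    have := mul_le_mul_of_nonneg_left (hup d) (by positivity : 0 ≤ τ / β)
    calc _ ≤ _ := this
      _ = _ := by field_simp
  have h2 := mul_le_mul_of_nonneg_left hR hk
  have h3 : L / (2 * ε ^ 2) - (τ / β - 1 / 2) * m ≤ 1 / Δt := by
    rw [le_div_iff₀ hΔ]
    rw [lt_div_iff₀ (by linarith)] at hΔ2
    linarith
  have h4 := mul_le_mul_of_nonneg_right h3 hdd
  have h5 : 1 / ε ^ 2 * (L / 2 * (d ⬝ᵥ d)) = L / (2 * ε ^ 2) * (d ⬝ᵥ d) := by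
    field_simp
  rw [hA2]
  linarith
end
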